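/- Let F be a field, f ∈ F[x] nonconstant with f' ≠ 0, t transcendental over F, α a root of φ = f − t, L the splitting field of φ over F(t), and G = Gal(L/F(t)) acting on the set Z of roots of φ. Let B ⊆ Z be a block of G containing α, and let h be the normal polynomial with f = g ∘ h for some g ∈ F[x] such that F(h(α)) equals the fixed field of the setwise stabilizer G_B in L. Then h(x) − h(α) = ∏_{γ ∈ B} (x − γ). -/

import Mathlib

/-!
The polynomial `φ = f − t` is irreducible over `F(t)`: by Gauss's lemma this can be checked in
`F[t][x]`, where exchanging the two variables turns `φ` into a polynomial of degree one with unit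
leading coefficient (`irreducible_polyPhi`).  As `φ' = f' ≠ 0`, it is also separable, so its
splitting field `L` is Galois over `F(t)`, and `G` is transitive on the roots of `φ`
(`exists_algEquiv_apply_eq`).

Put `u = h(α)`.  Since `h − u` divides `g ∘ h − g(u) = φ`, it splits in `L` with simple roots, and
it remains to see that its set of roots is `B`.  Every root of `h − u` is a root of `φ`, and every
root of `φ` is of the form `σ α`.  It is a root of `h − u` iff `σ u = u`, which by the Galois
correspondence means that `σ` stabilizes `B`; as `B` is a block containing `α`, this is equivalent
to `σ α ∈ B`.
-/

open Polynomial

/-- For `f ∈ F[x]`, the polynomial `φ = f − t` over the rational function field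
`F(t) = RatFunc F` (with `t = RatFunc.X`). -/
noncomputable abbrev polyPhi {F : Type*} [Field F] (f : F[X]) : Polynomial (RatFunc F) :=
  f.map (algebraMap F (RatFunc F)) - Polynomial.C RatFunc.X

theorem irreducible_polyPhi {F : Type*} [Field F] (f : F[X]) (hf : 0 < f.natDegree) :
    Irreducible (polyPhi f) := by
  have hmap : polyPhi f = (f.map C - C X : F[X][X]).map (algebraMap F[X] (RatFunc F)) := by
    rw [Polynomial.map_sub, Polynomial.map_map, map_C, RatFunc.algebraMap_X]
    rfl
  have hlead : (f.map C - C X : F[X][X]).coeff f.natDegree = C f.leadingCoeff := by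
    rw [coeff_sub, coeff_map, coeff_C_of_ne_zero hf.ne', sub_zero, leadingCoeff]
  have hprim : (f.map C - C X : F[X][X]).IsPrimitive := by
    intro r hr
    have h1 := C_dvd_iff_dvd_coeff r _ |>.1 hr f.natDegree
    rw [hlead] at h1
    refine isUnit_of_dvd_unit h1 (isUnit_C.2 ?_)
    rw [isUnit_iff_ne_zero, leadingCoeff_ne_zero]
    rintro rfl
    simp at hf
  rw [hmap, ← hprim.irreducible_iff_irreducible_map_fraction_map,
    ← MulEquiv.irreducible_iff (Bivariate.swap (R := F))]
  rw [map_sub, Bivariate.swap_map_C, Bivariate.swap_X, ← neg_sub]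
  exact (Associated.refl _).neg_left.irreducible_iff.2 (irreducible_X_sub_C f)

theorem separable_polyPhi {F : Type*} [Field F] (f : F[X]) (hf : 0 < f.natDegree)
    (hf' : derivative f ≠ 0) : (polyPhi f).Separable := by
  rw [separable_iff_derivative_ne_zero (irreducible_polyPhi f hf)]
  rw [derivative_sub, derivative_C, sub_zero, derivative_map]
  exact (Polynomial.map_ne_zero_iff (algebraMap F (RatFunc F)).injective).2 hf'

/-- In a normal extension, the automorphism group is transitive on the roots of an irreducible
polynomial. -/
theorem exists_algEquiv_apply_eq {K L : Type*} [Field K] [Field L] [Algebra K L] [Normal K L]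
    {p : K[X]} (hp : Irreducible p) {x y : L} (hx : aeval x p = 0) (hy : aeval y p = 0) :
    ∃ σ : L ≃ₐ[K] L, σ x = y := by
  have : IsConjRoot K y x := by
    rw [isConjRoot_def, ← minpoly.eq_of_irreducible hp hx, ← minpoly.eq_of_irreducible hp hy]
  exact this.exists_algEquiv

open scoped Pointwise in
/-- An automorphism fixing `u` stabilizes `B`, if `u` generates the fixed field of the stabilizer
of `B`. -/
theorem image_eq_of_apply_eq {K L : Type*} [Field K] [Field L] [Algebra K L]
    [FiniteDimensional K L] (B : Set L) (u : L)
    (hfix : ∀ x : L, x ∈ IntermediateField.adjoin K {u} ↔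
      ∀ σ : L ≃ₐ[K] L, ⇑σ '' B = B → σ x = x)
    (σ : L ≃ₐ[K] L) (hσ : σ u = u) : ⇑σ '' B = B := by
  have hE : IntermediateField.adjoin K {u} =
      IntermediateField.fixedField (MulAction.stabilizer (L ≃ₐ[K] L) B) := by
    ext x
    rw [hfix, IntermediateField.mem_fixedField_iff]
    rfl
  have hmem : σ ∈ (IntermediateField.adjoin K {u}).fixingSubgroup := by
    rw [← Subgroup.zpowers_le, ← IntermediateField.le_iff_le,
      IntermediateField.adjoin_simple_le_iff, IntermediateField.mem_fixedField_iff]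
    intro τ hτ
    have : Subgroup.zpowers σ ≤ MulAction.stabilizer (L ≃ₐ[K] L) u := by
      rw [Subgroup.zpowers_le]
      exact hσ
    exact this hτ
  rw [hE, IntermediateField.fixingSubgroup_fixedField] at hmem
  exact hmem

/-- **Lemma.** Let `φ = f − t`, `L` its splitting field over `F(t)`,
`G = Gal(L/F(t))`, `α` a root of `φ`, and `B ⊆ Z` a block of `G` containing `α`.
Let `h` be the normal polynomial with `f = g ∘ h` for some `g` such that `F(h(α))` is
the fixed field of the setwise stabilizer `G_B` in `L`.  Then
`h(x) − h(α) = ∏_{γ ∈ B} (x − γ)`. -/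
theorem right_component_eq_prod_over_block
    {F : Type*} [Field F] (f : F[X]) (hf : 0 < f.natDegree) (hf' : derivative f ≠ 0)
    (α : (polyPhi f).SplittingField) (hα : aeval α (polyPhi f) = 0)
    (B : Set (polyPhi f).SplittingField) (hBfin : B.Finite)
    (hBroots : B ⊆ (polyPhi f).rootSet (polyPhi f).SplittingField)
    (hαB : α ∈ B)
    (hblock : ∀ σ : (polyPhi f).SplittingField ≃ₐ[RatFunc F] (polyPhi f).SplittingField,
      ⇑σ '' B ∩ B = ∅ ∨ ⇑σ '' B ∩ B = B)
    (g h : F[X]) (hmonic : h.Monic) (hnormal : h.coeff 0 = 0) (hgh : f = g.comp h)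
    -- `F(h(α))` equals the fixed field of `G_B`
    (hfix : ∀ x : (polyPhi f).SplittingField,
      x ∈ IntermediateField.adjoin (RatFunc F) {aeval α h} ↔
        ∀ σ : (polyPhi f).SplittingField ≃ₐ[RatFunc F] (polyPhi f).SplittingField,
          ⇑σ '' B = B → σ x = x) :
    h.map (algebraMap F (polyPhi f).SplittingField) - C (aeval α h) =
      ∏ γ ∈ hBfin.toFinset, (X - C γ) := by
  classical
  have hirr := irreducible_polyPhi f hf
  have hsep := separable_polyPhi f hf hf'
  have : IsGalois (RatFunc F) (polyPhi f).SplittingField :=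
    IsGalois.of_separable_splitting_field hsep
  have hphi : ∀ x : (polyPhi f).SplittingField, aeval x (polyPhi f) =
      aeval (aeval x h) g - algebraMap (RatFunc F) _ RatFunc.X := by
    intro x
    rw [← aeval_comp, ← hgh, map_sub, aeval_C, aeval_map_algebraMap]
  have hσh : ∀ (σ : (polyPhi f).SplittingField ≃ₐ[RatFunc F] (polyPhi f).SplittingField)
      (x : (polyPhi f).SplittingField), σ (aeval x h) = aeval (σ x) h := by
    intro σ x
    rw [← aeval_map_algebraMap (RatFunc F) x h, ← aeval_map_algebraMap (RatFunc F) (σ x) h,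
      aeval_algHom_apply σ]
  have hB : ∀ γ, γ ∈ B ↔ aeval γ h = aeval α h := by
    intro γ
    constructor
    · intro hγ
      obtain ⟨σ, rfl⟩ := exists_algEquiv_apply_eq hirr hα (aeval_eq_zero_of_mem_rootSet (hBroots hγ))
      have hσB : ⇑σ '' B = B := by
        rcases hblock σ with h0 | h0
        · exact absurd h0 (Set.Nonempty.ne_empty ⟨σ α, Set.mem_image_of_mem _ hαB, hγ⟩)
        -- `B ⊆ σ(B)`, and the two finite sets have the same cardinality
        · exact (Set.eq_of_subset_of_ncard_le (Set.inter_eq_right.1 h0)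
            (Set.ncard_image_le hBfin) (hBfin.image _)).symm
      rw [← hσh]
      exact (hfix _).1 (IntermediateField.mem_adjoin_simple_self _ _) σ hσB
    · intro hγ
      have hγ0 : aeval γ (polyPhi f) = 0 := by rw [hphi, hγ, ← hphi, hα]
      obtain ⟨σ, rfl⟩ := exists_algEquiv_apply_eq hirr hα hγ0
      have hσB := image_eq_of_apply_eq B _ hfix σ (by rw [hσh, hγ])
      rw [← hσB]
      exact Set.mem_image_of_mem _ hαB
  have hdeg : 0 < h.natDegree := by
    rw [hgh, natDegree_comp] at hf
    exact Nat.pos_of_mul_pos_left hf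
  set q := h.map (algebraMap F (polyPhi f).SplittingField) - C (aeval α h) with hq
  have hqmonic : q.Monic := by
    refine (hmonic.map _).sub_of_left ?_
    refine degree_C_le.trans_lt ?_
    rw [degree_map]
    exact natDegree_pos_iff_degree_pos.1 hdeg
  have hdvd : q ∣ (polyPhi f).map (algebraMap (RatFunc F) (polyPhi f).SplittingField) := by
    have h1 := sub_dvd_eval_sub (h.map (algebraMap F (polyPhi f).SplittingField))
      (C (aeval α h)) ((g.map (algebraMap F (polyPhi f).SplittingField)).map C)
    convert h1 using 1
    have h2 := hphi α
    rw [hα, eq_comm, sub_eq_zero] at h2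
    rw [eval_map, ← comp, ← Polynomial.map_comp, ← hgh, eval_map, eval₂_hom, eval_map, ← aeval_def,
      h2, Polynomial.map_sub, map_C, Polynomial.map_map, ← IsScalarTower.algebraMap_eq]
  have hsplit : q.Splits := (SplittingField.splits (polyPhi f)).of_dvd
    (Polynomial.map_ne_zero hirr.ne_zero) hdvd
  have hnodup : q.roots.Nodup := nodup_roots (hsep.map.of_dvd hdvd)
  have hroots : q.roots = hBfin.toFinset.val := by
    refine (Multiset.Nodup.ext hnodup (Finset.nodup _)).2 fun γ => ?_
    rw [mem_roots hqmonic.ne_zero, Finset.mem_val, Set.Finite.mem_toFinset, hB, IsRoot.def, hq,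
      eval_sub, eval_C, eval_map_algebraMap, sub_eq_zero]
  rw [hsplit.eq_prod_roots_of_monic hqmonic, hroots]
  rfl
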